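/- arXiv:1303.4448 — 2 statements merged into one kernel-verified Lean document; each statement's English description precedes it below -/
import Mathlib

section
/- Fix N ≥ 1 and m ≥ 1, and let A_m(ℓ) denote the number of pairs of binary strings of length ℓ whose digit-sum sequence avoids the pattern P(m). Then the number of pairs (x, y) of N-bit binary numbers for which m-truncated addition agrees with ordinary addition modulo 2^N, i.e. #{(x,y) ∈ {0,…,2^N−1}^2 : x +_m y ≡ x + y (mod 2^N)}, equals 4 · A_m(N−1). Equivalently, the probability that x +_m y = x + y for uniformly chosen N-bit x and y is A_m(N−1)/4^{N−1}. -/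
/-!
Ordinary addition modulo `2 ^ N` has digits `x_i ⊕ y_i ⊕ c_i`, where the true carry `c_i` is `1` iff
some position `j < i` generates a carry (digit sum `2`) and all positions strictly between `j` and
`i` propagate it (digit sum `1`); see `carry_eq_one_iff`. By uniqueness of binary digits,
truncated and ordinary addition agree iff the truncated and true carries coincide at every `i < N`
(`tadd_eq_iff`). They differ at some such `i` exactly when a generated carry travels more than `m`
places, i.e. when `P(m)` occurs within the lowest `N - 1` positions (`agree_iff_avoids`).
The avoidance condition does not see the two top digits, which gives the factor `4`.
-/

/-- The `i`-th binary digit of `x`. -/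
def bitd (x i : ℕ) : ℕ := (x / 2 ^ i) % 2

open Classical in
/-- The `m`-truncated carry bit at position `i`: it is 1 iff there is
`i - m ≤ j < i` with `(x_j, y_j) = (1,1)` and `x_k + y_k = 1` for all `j < k < i`. -/
noncomputable def tcarry (m x y i : ℕ) : ℕ :=
  if ∃ j, i - m ≤ j ∧ j < i ∧ bitd x j = 1 ∧ bitd y j = 1 ∧
      (∀ k, j < k → k < i → bitd x k + bitd y k = 1) then 1 else 0

/-- The `m`-truncated addition of `N`-bit numbers: the bitwise xor of `x`, `y`
and the truncated carry array. -/
noncomputable def tadd (N m x y : ℕ) : ℕ :=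
  ∑ i ∈ Finset.range N, ((bitd x i + bitd y i + tcarry m x y i) % 2) * 2 ^ i

/-- The digit-sum sequence of the pair of length-`ℓ` binary strings `(x,y)` avoids the
pattern `P(m)`: there is no index `j` (with the whole pattern inside positions
`0, …, ℓ - 1`) where the digit sum is `2` directly followed by `m` consecutive
digit sums equal to `1`. -/
def avoids (m ℓ x y : ℕ) : Prop :=
  ∀ j, j + m + 1 ≤ ℓ →
    ¬(bitd x j + bitd y j = 2 ∧ ∀ k, j < k → k ≤ j + m → bitd x k + bitd y k = 1)

open Classical in
/-- `A m ℓ` counts the pairs of length-`ℓ` binary strings whose digit-sum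
sequence avoids the pattern `P(m)`. -/
noncomputable def A (m ℓ : ℕ) : ℕ :=
  ((Finset.range (2 ^ ℓ) ×ˢ Finset.range (2 ^ ℓ)).filter fun p => avoids m ℓ p.1 p.2).card

lemma bitd_lt_two (x i : ℕ) : bitd x i < 2 := Nat.mod_lt _ (by norm_num)

/-- The carry into position `i` in the ordinary addition of `x` and `y`. -/
def carry (x y i : ℕ) : ℕ := (x % 2 ^ i + y % 2 ^ i) / 2 ^ i

lemma mod_two_pow_succ_bitd (x i : ℕ) : x % 2 ^ (i + 1) = x % 2 ^ i + 2 ^ i * bitd x i := by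
  rw [pow_succ, Nat.mod_mul]
  rfl

lemma carry_succ (x y i : ℕ) : carry x y (i + 1) = (bitd x i + bitd y i + carry x y i) / 2 := by
  have hp : 0 < 2 ^ i := by positivity
  unfold carry
  rw [mod_two_pow_succ_bitd, mod_two_pow_succ_bitd, pow_succ, ← Nat.div_div_eq_div_mul]
  congr 1
  rw [show x % 2 ^ i + 2 ^ i * bitd x i + (y % 2 ^ i + 2 ^ i * bitd y i)
    = (x % 2 ^ i + y % 2 ^ i) + 2 ^ i * (bitd x i + bitd y i) by ring,
    Nat.add_mul_div_left _ _ hp]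
  ring

lemma bitd_add (x y i : ℕ) : bitd (x + y) i = (bitd x i + bitd y i + carry x y i) % 2 := by
  have hp : 0 < 2 ^ i := by positivity
  have h : (x + y) / 2 ^ i = carry x y i + (x / 2 ^ i + y / 2 ^ i) := by
    conv_lhs => rw [← Nat.mod_add_div x (2 ^ i), ← Nat.mod_add_div y (2 ^ i)]
    rw [show x % 2 ^ i + 2 ^ i * (x / 2 ^ i) + (y % 2 ^ i + 2 ^ i * (y / 2 ^ i))
      = (x % 2 ^ i + y % 2 ^ i) + 2 ^ i * (x / 2 ^ i + y / 2 ^ i) by ring,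
      Nat.add_mul_div_left _ _ hp]
    rfl
  simp only [bitd, h]
  omega

lemma carry_lt_two (x y i : ℕ) : carry x y i < 2 := by
  have hp : 0 < 2 ^ i := by positivity
  have hx := Nat.mod_lt x hp
  have hy := Nat.mod_lt y hp
  unfold carry
  rw [Nat.div_lt_iff_lt_mul hp]
  omega

/-- A carry enters position `i` iff it is generated at some `j < i` and propagated by every
position in between. -/
lemma carry_eq_one_iff (x y i : ℕ) : carry x y i = 1 ↔
    ∃ j, j < i ∧ bitd x j = 1 ∧ bitd y j = 1 ∧
      ∀ k, j < k → k < i → bitd x k + bitd y k = 1 := by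
  induction i with
  | zero => simp [carry, Nat.mod_one]
  | succ i ih =>
    have hx := bitd_lt_two x i
    have hy := bitd_lt_two y i
    have hc := carry_lt_two x y i
    rw [carry_succ]
    constructor
    · intro h
      by_cases hb : bitd x i = 1 ∧ bitd y i = 1
      · exact ⟨i, by omega, hb.1, hb.2, fun k h1 h2 => by omega⟩
      · obtain ⟨j, hj, h1, h2, h3⟩ := ih.1 (by omega)
        refine ⟨j, by omega, h1, h2, fun k hk1 hk2 => ?_⟩
        rcases Nat.lt_succ_iff_lt_or_eq.1 hk2 with hk | rfl
        · exact h3 k hk1 hk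
        · omega
    · rintro ⟨j, hj, h1, h2, h3⟩
      rcases Nat.lt_succ_iff_lt_or_eq.1 hj with hj | rfl
      · have := ih.2 ⟨j, hj, h1, h2, fun k hk1 hk2 => h3 k hk1 (by omega)⟩
        have := h3 i hj (by omega)
        omega
      · omega

lemma tcarry_lt_two (m x y i : ℕ) : tcarry m x y i < 2 := by
  unfold tcarry
  split_ifs <;> norm_num

lemma tcarry_eq_one_iff (m x y i : ℕ) : tcarry m x y i = 1 ↔
    ∃ j, i - m ≤ j ∧ j < i ∧ bitd x j = 1 ∧ bitd y j = 1 ∧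
      ∀ k, j < k → k < i → bitd x k + bitd y k = 1 := by
  unfold tcarry
  split_ifs with h
  · exact iff_of_true rfl h
  · exact iff_of_false (by simp) h

/-- Uniqueness of binary digits. -/
lemma sum_digits_eq_mod_iff (d : ℕ → ℕ) (hd : ∀ i, d i < 2) (z N : ℕ) :
    ∑ i ∈ Finset.range N, d i * 2 ^ i = z % 2 ^ N ↔ ∀ i < N, d i = bitd z i := by
  have hlt : ∀ n, ∑ i ∈ Finset.range n, d i * 2 ^ i < 2 ^ n := by
    intro n
    induction n with
    | zero => simp
    | succ n ih =>
      rw [Finset.sum_range_succ, pow_succ]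
      have := Nat.mul_le_mul_right (2 ^ n) (Nat.lt_succ_iff.1 (hd n))
      omega
  induction N with
  | zero => simp [Nat.mod_one]
  | succ N ih =>
    have hp : 0 < 2 ^ N := by positivity
    rw [Finset.sum_range_succ, mod_two_pow_succ_bitd, Nat.forall_lt_succ_right]
    refine Iff.trans ?_ (and_congr_left' ih)
    constructor
    · intro h
      have h1 := congrArg (· % 2 ^ N) h
      have h2 := congrArg (· / 2 ^ N) h
      simp only [mul_comm (d N)] at h1 h2
      rw [Nat.add_mul_mod_self_left, Nat.add_mul_mod_self_left, Nat.mod_mod,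
        Nat.mod_eq_of_lt (hlt N)] at h1
      rw [Nat.add_mul_div_left _ _ hp, Nat.add_mul_div_left _ _ hp,
        Nat.div_eq_of_lt (hlt N), Nat.div_eq_of_lt (Nat.mod_lt z hp)] at h2
      exact ⟨h1, by omega⟩
    · rintro ⟨h1, h2⟩
      rw [h1, h2, mul_comm]

lemma tadd_eq_iff (N m x y : ℕ) : tadd N m x y = (x + y) % 2 ^ N ↔
    ∀ i < N, tcarry m x y i = carry x y i := by
  unfold tadd
  rw [sum_digits_eq_mod_iff (fun i => (bitd x i + bitd y i + tcarry m x y i) % 2)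
    (fun i => Nat.mod_lt _ (by norm_num))]
  refine forall₂_congr fun i _ => ?_
  have := tcarry_lt_two m x y i
  have := carry_lt_two x y i
  rw [bitd_add]
  omega

lemma agree_iff_avoids (n m x y : ℕ) : tadd (n + 1) m x y = (x + y) % 2 ^ (n + 1) ↔
    avoids m n x y := by
  rw [tadd_eq_iff]
  constructor
  · rintro h j hj ⟨h2, h1⟩
    have hx := bitd_lt_two x j
    have hy := bitd_lt_two y j
    -- The true carry generated at `j` reaches position `j + m + 1`, out of reach of truncation.
    have hc : carry x y (j + m + 1) = 1 :=
      (carry_eq_one_iff _ _ _).2 ⟨j, by omega, by omega, by omega,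
        fun k hk1 hk2 => h1 k hk1 (by omega)⟩
    rw [← h _ (by omega)] at hc
    obtain ⟨j', hj1, hj2, hx', hy', -⟩ := (tcarry_eq_one_iff _ _ _ _).1 hc
    have := h1 j' (by omega) (by omega)
    omega
  · intro h i hi
    have ht := tcarry_lt_two m x y i
    have hc := carry_lt_two x y i
    have : tcarry m x y i = 1 ↔ carry x y i = 1 := by
      rw [tcarry_eq_one_iff, carry_eq_one_iff]
      constructor
      · rintro ⟨j, -, hj⟩
        exact ⟨j, hj⟩
      · rintro ⟨j, hj, hx, hy, hk⟩
        refine ⟨j, ?_, hj, hx, hy, hk⟩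
        by_contra hlt
        exact h j (by omega) ⟨by omega, fun k h1 h2 => hk k h1 (by omega)⟩
    omega

lemma bitd_add_mul_two_pow (a t n i : ℕ) (hi : i < n) : bitd (a + 2 ^ n * t) i = bitd a i := by
  obtain ⟨d, rfl⟩ := Nat.exists_eq_add_of_lt hi
  unfold bitd
  rw [show 2 ^ (i + d + 1) * t = 2 ^ i * (2 * (2 ^ d * t)) by ring,
    Nat.add_mul_div_left _ _ (by positivity), Nat.add_mul_mod_self_left]

/-- Avoidance within the lowest `n` positions is insensitive to digits at positions `≥ n`. -/
lemma avoids_add_mul_two_pow (m n a b s t : ℕ) :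
    avoids m n (a + 2 ^ n * s) (b + 2 ^ n * t) ↔ avoids m n a b := by
  unfold avoids
  refine forall₂_congr fun j hj => not_congr (and_congr ?_ ?_)
  · rw [bitd_add_mul_two_pow _ _ _ _ (by omega), bitd_add_mul_two_pow _ _ _ _ (by omega)]
  · refine forall₃_congr fun k _ hk => ?_
    rw [bitd_add_mul_two_pow _ _ _ _ (by omega), bitd_add_mul_two_pow _ _ _ _ (by omega)]

open Classical in
/-- Each avoiding pair of `n`-digit strings has exactly four extensions by top digits. -/
lemma card_avoids_succ (m n : ℕ) :
    ((Finset.range (2 ^ (n + 1)) ×ˢ Finset.range (2 ^ (n + 1))).filter fun p =>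
      avoids m n p.1 p.2).card = 4 * A m n := by
  have hp : 0 < 2 ^ n := by positivity
  have h4 : (Finset.range 2 ×ˢ Finset.range 2).card = 4 := rfl
  rw [A, ← h4, ← Finset.card_product]
  refine Finset.card_nbij'
    (fun p => ((p.1 / 2 ^ n, p.2 / 2 ^ n), (p.1 % 2 ^ n, p.2 % 2 ^ n)))
    (fun q => (q.2.1 + 2 ^ n * q.1.1, q.2.2 + 2 ^ n * q.1.2)) ?_ ?_ ?_ ?_
  · rintro ⟨x, y⟩ h
    simp only [Finset.coe_filter, Finset.mem_product, Finset.mem_range, Set.mem_ofPred_eq,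
      pow_succ] at h
    obtain ⟨⟨hx, hy⟩, ha⟩ := h
    simp only [SetLike.mem_coe, Finset.mem_product, Finset.mem_range, Finset.mem_filter]
    refine ⟨⟨?_, ?_⟩, ⟨Nat.mod_lt _ hp, Nat.mod_lt _ hp⟩, ?_⟩
    · rw [Nat.div_lt_iff_lt_mul hp]; omega
    · rw [Nat.div_lt_iff_lt_mul hp]; omega
    · rwa [← avoids_add_mul_two_pow m n _ _ (x / 2 ^ n) (y / 2 ^ n), Nat.mod_add_div,
        Nat.mod_add_div]
  · rintro ⟨⟨s, t⟩, a, b⟩ h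
    simp only [SetLike.mem_coe, Finset.mem_product, Finset.mem_range, Finset.mem_filter] at h
    obtain ⟨⟨hs, ht⟩, ⟨ha, hb⟩, h⟩ := h
    simp only [SetLike.mem_coe, Finset.mem_product, Finset.mem_range, Finset.mem_filter, pow_succ]
    have h1 := Nat.mul_le_mul_left (2 ^ n) (Nat.lt_succ_iff.1 hs)
    have h2 := Nat.mul_le_mul_left (2 ^ n) (Nat.lt_succ_iff.1 ht)
    exact ⟨⟨by omega, by omega⟩, (avoids_add_mul_two_pow m n a b s t).2 h⟩
  · rintro ⟨x, y⟩ -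
    simp only [Nat.mod_add_div]
  · rintro ⟨⟨s, t⟩, a, b⟩ h
    simp only [SetLike.mem_coe, Finset.mem_product, Finset.mem_range, Finset.mem_filter] at h
    obtain ⟨-, ⟨ha, hb⟩, -⟩ := h
    simp only [Nat.add_mul_div_left _ _ hp, Nat.add_mul_mod_self_left, Nat.div_eq_of_lt ha,
      Nat.div_eq_of_lt hb, Nat.mod_eq_of_lt ha, Nat.mod_eq_of_lt hb, zero_add]

open Classical in
/-- the number of pairs of `N`-bit numbers on which `m`-truncated
addition agrees with ordinary addition mod `2^N` is `4 · A_m(N-1)`; equivalently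
the agreement probability for uniform inputs is `A_m(N-1)/4^(N-1)`. -/
theorem card_agree_eq (N m : ℕ) (hN : 1 ≤ N) (hm : 1 ≤ m) :
    ((Finset.range (2 ^ N) ×ˢ Finset.range (2 ^ N)).filter fun p =>
        tadd N m p.1 p.2 = (p.1 + p.2) % 2 ^ N).card = 4 * A m (N - 1) := by
  obtain ⟨n, rfl⟩ := Nat.exists_eq_add_of_le' hN
  rw [Nat.add_sub_cancel, ← card_avoids_succ]
  refine congrArg Finset.card (Finset.filter_congr fun p _ => ?_)
  exact agree_iff_avoids n m p.1 p.2
end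

section
/- For every N ≥ 1, every m ≥ 0, and every rotation amount r, the truncated MIX map on pairs of N-bit words defined by MIX_m(x, y) = (x +_m y, ρ(x) ⊕ (x +_m y)), where +_m is m-truncated addition, ρ is bitwise rotation by r positions, and ⊕ is bitwise XOR, is a bijection from pairs of N-bit words to pairs of N-bit words. -/
/-- Bitwise rotation of an `N`-bit word by `r` positions: bit `i` of `rot N r x`
is bit `(i + r) % N` of `x`. -/
def rot (N r x : ℕ) : ℕ := ∑ i ∈ Finset.range N, bitd x ((i + r) % N) * 2 ^ i

lemma sum_digits_lt (f : ℕ → ℕ) (hf : ∀ i, f i < 2) (N : ℕ) :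
    ∑ i ∈ Finset.range N, f i * 2 ^ i < 2 ^ N := by
  induction N with
  | zero => simp
  | succ n ih =>
    rw [Finset.sum_range_succ, pow_succ]
    have : f n * 2 ^ n ≤ 1 * 2 ^ n := Nat.mul_le_mul_right _ (by have := hf n; omega)
    omega

lemma bitd_sum_digits (f : ℕ → ℕ) (hf : ∀ i, f i < 2) (N i : ℕ) (hi : i < N) :
    bitd (∑ k ∈ Finset.range N, f k * 2 ^ k) i = f i := by
  induction N with
  | zero => omega
  | succ n ih =>
    rw [Finset.sum_range_succ]
    have hlt := sum_digits_lt f hf n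
    unfold bitd at ih ⊢
    rcases Nat.lt_succ_iff_lt_or_eq.mp hi with h | rfl
    · obtain ⟨d, rfl⟩ := Nat.exists_eq_add_of_lt h
      rw [show f (i + d + 1) * 2 ^ (i + d + 1) = 2 ^ i * (2 * (f (i + d + 1) * 2 ^ d)) by ring,
        Nat.add_mul_div_left _ _ (by positivity), Nat.add_mul_mod_self_left]
      exact ih h
    · rw [Nat.add_mul_div_right _ _ (by positivity), Nat.div_eq_of_lt hlt, zero_add,
        Nat.mod_eq_of_lt (hf i)]

lemma eq_of_bitd_eq {N x y : ℕ} (hx : x < 2 ^ N) (hy : y < 2 ^ N)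
    (h : ∀ i < N, bitd x i = bitd y i) : x = y := by
  apply Nat.eq_of_testBit_eq
  intro i
  rcases lt_or_ge i N with hi | hi
  · have := h i hi
    simp only [bitd] at this
    simp only [Nat.testBit_eq_decide_div_mod_eq, this]
  · have hp : 2 ^ N ≤ 2 ^ i := Nat.pow_le_pow_right two_pos hi
    rw [Nat.testBit_lt_two_pow (hx.trans_le hp), Nat.testBit_lt_two_pow (hy.trans_le hp)]

lemma tadd_lt (N m x y : ℕ) : tadd N m x y < 2 ^ N :=
  sum_digits_lt _ (fun _ => Nat.mod_lt _ two_pos) N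

lemma rot_lt (N r x : ℕ) : rot N r x < 2 ^ N :=
  sum_digits_lt _ (fun _ => bitd_lt_two _ _) N

/-- The truncated carry into position `i` depends only on the digits below `i`. -/
lemma tcarry_congr {m x y y' i : ℕ} (h : ∀ j < i, bitd y j = bitd y' j) :
    tcarry m x y i = tcarry m x y' i := by
  unfold tcarry
  congr 1
  apply propext
  constructor
  · rintro ⟨j, h1, h2, h3, h4, h5⟩
    exact ⟨j, h1, h2, h3, h j h2 ▸ h4, fun k hk hk' => h k hk' ▸ h5 k hk hk'⟩
  · rintro ⟨j, h1, h2, h3, h4, h5⟩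
    exact ⟨j, h1, h2, h3, (h j h2).symm ▸ h4, fun k hk hk' => (h k hk').symm ▸ h5 k hk hk'⟩

lemma tadd_right_inj {N m x y y' : ℕ} (hy : y < 2 ^ N) (hy' : y' < 2 ^ N)
    (h : tadd N m x y = tadd N m x y') : y = y' := by
  refine eq_of_bitd_eq hy hy' fun i => ?_
  induction i using Nat.strong_induction_on with
  | _ i ih =>
    intro hi
    have hc : tcarry m x y i = tcarry m x y' i :=
      tcarry_congr fun j hj => ih j hj (hj.trans hi)
    have hb := congrArg (bitd · i) h
    simp only [tadd] at hb
    rw [bitd_sum_digits _ (fun _ => Nat.mod_lt _ two_pos) N i hi,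
      bitd_sum_digits _ (fun _ => Nat.mod_lt _ two_pos) N i hi, hc] at hb
    have := bitd_lt_two y i
    have := bitd_lt_two y' i
    omega

lemma rot_inj {N r x x' : ℕ} (hx : x < 2 ^ N) (hx' : x' < 2 ^ N)
    (h : rot N r x = rot N r x') : x = x' := by
  refine eq_of_bitd_eq hx hx' fun i hi => ?_
  have hN : 0 < N := by omega
  -- Digit `i` of `x` is digit `i - r` (modulo `N`) of the rotated word.
  have hk : ((i + (N - r % N)) % N + r) % N = i := by
    have hr := Nat.mod_lt r hN
    rw [Nat.mod_add_mod, Nat.add_mod_eq_add_mod_left (b := r % N) _ (Nat.mod_mod r N).symm,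
      show i + (N - r % N) + r % N = i + N by omega, Nat.add_mod_right, Nat.mod_eq_of_lt hi]
  have hb := congrArg (bitd · ((i + (N - r % N)) % N)) h
  simp only [rot] at hb
  rw [bitd_sum_digits _ (fun _ => bitd_lt_two _ _) N _ (Nat.mod_lt _ hN),
    bitd_sum_digits _ (fun _ => bitd_lt_two _ _) N _ (Nat.mod_lt _ hN), hk] at hb
  exact hb

/-- the truncated Threefish `MIX` map
`(x, y) ↦ (x +_m y, ρ(x) ⊕ (x +_m y))` is a bijection on pairs of `N`-bit words. -/
theorem mix_trunc_bijOn (N m r : ℕ) (hN : 1 ≤ N) :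
    Set.BijOn
      (fun p : ℕ × ℕ => (tadd N m p.1 p.2, rot N r p.1 ^^^ tadd N m p.1 p.2))
      (Set.Iio (2 ^ N) ×ˢ Set.Iio (2 ^ N)) (Set.Iio (2 ^ N) ×ˢ Set.Iio (2 ^ N)) := by
  have hmaps : Set.MapsTo
      (fun p : ℕ × ℕ => (tadd N m p.1 p.2, rot N r p.1 ^^^ tadd N m p.1 p.2))
      (Set.Iio (2 ^ N) ×ˢ Set.Iio (2 ^ N)) (Set.Iio (2 ^ N) ×ˢ Set.Iio (2 ^ N)) :=
    fun p _ => ⟨tadd_lt N m p.1 p.2, Nat.xor_lt_two_pow (rot_lt N r p.1) (tadd_lt N m p.1 p.2)⟩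
  have hfin : (Set.Iio (2 ^ N) ×ˢ Set.Iio (2 ^ N) : Set (ℕ × ℕ)).Finite :=
    (Set.finite_Iio _).prod (Set.finite_Iio _)
  refine (hfin.injOn_iff_bijOn_of_mapsTo hmaps).mp ?_
  rintro ⟨x, y⟩ ⟨hx, hy⟩ ⟨x', y'⟩ ⟨hx', hy'⟩ h
  obtain ⟨hs, ht⟩ := Prod.mk.inj h
  simp only at hs ht
  rw [hs] at ht
  obtain rfl : x = x' := rot_inj hx hx' (Nat.xor_left_injective ht)
  obtain rfl : y = y' := tadd_right_inj hy hy' hs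
  rfl
end
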